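/- arXiv:0801.3277 — 2 statements merged into one kernel-verified Lean document; each statement's English description precedes it below -/
import Mathlib

section
/- Let n ≥ 1 and ζ = (ζ_1, …, ζ_n) ∈ ℂ^n, and let M_n(ζ) = (α_n, β_n; γ_n, δ_n) be as defined. The constant term of δ_n equals 1, so δ_n is invertible in the field ℂ((z)) of formal Laurent series; let x be the singular part (the sum of all strictly negative-degree terms) of δ_n^{−1}·β_n ∈ ℂ((z)). Then x is a Laurent polynomial supported in degrees −n, …, −1, and every entry of the matrix product (1, −x; 0, 1) · M_n(ζ) is a Laurent polynomial having only terms of nonnegative degree in z. -/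
open Matrix

/-- The singular part `(f)₋` of a Laurent series: the sum of its strictly
negative-degree terms. -/
noncomputable def singPart (f : LaurentSeries ℂ) : LaurentSeries ℂ where
  coeff k := if k < 0 then f.coeff k else 0
  isPWO_support' := by
    apply f.isPWO_support'.mono
    intro k hk
    simp only [Function.mem_support] at hk ⊢
    by_cases h : k < 0
    · simpa [h] using hk
    · simp [h] at hk

/-- The factor `(1, ζ_j z^{-j}; −conj(ζ_j) z^{j}, 1)`. -/
noncomputable def factor (j : ℕ) (c : ℂ) : Matrix (Fin 2) (Fin 2) (LaurentSeries ℂ) :=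
  !![1, HahnSeries.single (-(j : ℤ)) c;
     HahnSeries.single ((j : ℤ)) (-(starRingEnd ℂ c)), 1]

/-- `M_n(ζ)`: the product of the factors for `j = n, n−1, …, 1`, the `j = n` factor leftmost
(`ζ` is indexed starting at `1`). -/
noncomputable def Mmat (ζ : ℕ → ℂ) : ℕ → Matrix (Fin 2) (Fin 2) (LaurentSeries ℂ)
  | 0 => 1
  | k + 1 => factor (k + 1) (ζ (k + 1)) * Mmat ζ k

/-!
Every factor of `M_n` has determinant `1 + |ζ_j|²`, a constant, and induction on `n` shows that
`α_n`, `β_n` have no terms below degree `-n` while `γ_n`, `δ_n` are power series with `δ_n ≡ 1`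
modulo `z`. Thus `δ_n⁻¹` is a power series too, and with `x = (δ_n⁻¹ β_n)₋` the identities
`β_n - x δ_n = (δ_n⁻¹ β_n - x) δ_n` and
`α_n - x γ_n = δ_n⁻¹ det M_n + (δ_n⁻¹ β_n - x) γ_n` exhibit the top row of `(1, -x; 0, 1) M_n`
as power series. Orders of vanishing are measured by the `z`-adic valuation `Valued.v`, for which
`Valued.v f ≤ exp (-d)` says that `f` has no terms below degree `d`.
-/

open LaurentSeries WithZero

theorem shear_mul_apply_mem {R : Type*} [CommRing R] (A : Subring R)
    {M : Matrix (Fin 2) (Fin 2) R} {u x : R} (hu : u ∈ A) (hinv : u * M 1 1 = 1)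
    (hx : u * M 0 1 - x ∈ A) (hrow : ∀ j, M 1 j ∈ A) (hdet : M.det ∈ A) (i j : Fin 2) :
    (!![1, -x; 0, 1] * M) i j ∈ A := by
  have top_left : M 0 0 - x * M 1 0 = u * M.det + (u * M 0 1 - x) * M 1 0 := by
    rw [det_fin_two]
    linear_combination -M 0 0 * hinv
  have top_right : M 0 1 - x * M 1 1 = (u * M 0 1 - x) * M 1 1 := by
    linear_combination -M 0 1 * hinv
  have shear_mul : !![1, -x; 0, 1] * M =
      !![M 0 0 - x * M 1 0, M 0 1 - x * M 1 1; M 1 0, M 1 1] := by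
    ext i j
    fin_cases i <;> fin_cases j <;> simp [mul_apply, sub_eq_add_neg]
  rw [shear_mul, top_left, top_right]
  fin_cases i <;> fin_cases j
  · exact A.add_mem (A.mul_mem hu hdet) (A.mul_mem hx (hrow 0))
  · exact A.mul_mem hx (hrow 1)
  · exact hrow 0
  · exact hrow 1

section LaurentSeries

variable {K : Type*} [Field K]

theorem valuation_single_le (d : ℤ) (c : K) :
    Valued.v (HahnSeries.single d c : K⸨X⸩) ≤ exp (-d) :=
  (valuation_le_iff_coeff_lt_eq_zero K).2 fun _ hk => HahnSeries.coeff_single_of_ne hk.ne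

theorem valuation_single_mul_le {f : K⸨X⸩} {e : ℤ} (d : ℤ) (c : K) (hf : Valued.v f ≤ exp e) :
    Valued.v (HahnSeries.single d c * f) ≤ exp (e - d) := by
  rw [map_mul, sub_eq_neg_add, exp_add]
  exact mul_le_mul' (valuation_single_le d c) hf

theorem mem_integer_iff_coeff_eq_zero {f : K⸨X⸩} :
    f ∈ (Valued.v : Valuation K⸨X⸩ ℤᵐ⁰).integer ↔ ∀ k < 0, f.coeff k = 0 := by
  rw [Valuation.mem_integer_iff, valuation_le_iff_coeff_lt_log_eq_zero K one_ne_zero, log_one,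
    neg_zero]

theorem C_mem_integer (c : K) :
    (HahnSeries.C c : K⸨X⸩) ∈ (Valued.v : Valuation K⸨X⸩ ℤᵐ⁰).integer :=
  mem_integer_iff_coeff_eq_zero.2 fun _ hk => HahnSeries.coeff_single_of_ne hk.ne

end LaurentSeries

theorem sub_singPart_mem_integer (f : ℂ⸨X⸩) :
    f - singPart f ∈ (Valued.v : Valuation ℂ⸨X⸩ ℤᵐ⁰).integer := by
  refine mem_integer_iff_coeff_eq_zero.2 fun k hk => ?_
  simp [singPart, hk]

theorem coeff_singPart_eq_zero {f : ℂ⸨X⸩} {d k : ℤ} (hf : Valued.v f ≤ exp (-d))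
    (hk : k < d ∨ 0 ≤ k) : (singPart f).coeff k = 0 := by
  by_cases hneg : k < 0
  · simpa [singPart, hneg] using coeff_zero_of_lt_valuation ℂ hf (hk.resolve_right hneg.not_ge)
  · simp [singPart, hneg]

theorem det_factor (k : ℕ) (c : ℂ) : (factor k c).det = HahnSeries.C (1 + (‖c‖ : ℂ) ^ 2) := by
  rw [factor, det_fin_two_of, HahnSeries.single_mul_single, neg_add_cancel, mul_neg,
    Complex.mul_conj', HahnSeries.single_neg, sub_neg_eq_add, one_mul, map_add, map_one,
    HahnSeries.C_apply]

section Mmat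

variable (ζ : ℕ → ℂ) (n : ℕ) (j : Fin 2)

theorem det_Mmat :
    (Mmat ζ n).det = HahnSeries.C (∏ k ∈ Finset.range n, (1 + (‖ζ (k + 1)‖ : ℂ) ^ 2)) := by
  induction n with
  | zero => simp [Mmat]
  | succ n ih => rw [Mmat, det_mul, ih, det_factor, ← map_mul, Finset.prod_range_succ, mul_comm]

theorem Mmat_succ_zero_apply :
    Mmat ζ (n + 1) 0 j =
      Mmat ζ n 0 j + HahnSeries.single (-((n + 1 : ℕ) : ℤ)) (ζ (n + 1)) * Mmat ζ n 1 j := by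
  simp [Mmat, factor, mul_apply]

theorem Mmat_succ_one_apply :
    Mmat ζ (n + 1) 1 j =
      Mmat ζ n 1 j +
        HahnSeries.single ((n + 1 : ℕ) : ℤ) (-(starRingEnd ℂ (ζ (n + 1)))) * Mmat ζ n 0 j := by
  simp [Mmat, factor, mul_apply, add_comm]

theorem valuation_Mmat_le :
    Valued.v (Mmat ζ n 0 j) ≤ exp (n : ℤ) ∧ Valued.v (Mmat ζ n 1 j) ≤ exp (0 : ℤ) := by
  induction n with
  | zero => fin_cases j <;> simp [Mmat, one_apply]
  | succ n ih =>
    obtain ⟨htop, hbot⟩ := ih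
    rw [Mmat_succ_zero_apply, Mmat_succ_one_apply]
    constructor
    · exact Valued.v.map_add_le (htop.trans (exp_le_exp.2 (by lia)))
        ((valuation_single_mul_le _ _ hbot).trans (exp_le_exp.2 (by lia)))
    · exact Valued.v.map_add_le hbot
        ((valuation_single_mul_le _ _ htop).trans (exp_le_exp.2 (by lia)))

theorem valuation_Mmat_one_one_sub_one_le : Valued.v (Mmat ζ n 1 1 - 1) ≤ exp (-1 : ℤ) := by
  induction n with
  | zero => simp [Mmat]
  | succ n ih =>
    rw [Mmat_succ_one_apply, add_sub_right_comm]
    exact Valued.v.map_add_le ih ((valuation_single_mul_le _ _ (valuation_Mmat_le ζ n 1).1).trans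
      (exp_le_exp.2 (by lia)))

theorem coeff_zero_Mmat_one_one : (Mmat ζ n 1 1).coeff 0 = 1 := by
  simpa using eq_coeff_of_valuation_sub_lt ℂ (valuation_Mmat_one_one_sub_one_le ζ n) zero_lt_one

theorem valuation_Mmat_one_one : Valued.v (Mmat ζ n 1 1) = 1 := by
  have hlt : Valued.v (Mmat ζ n 1 1 - 1) < 1 :=
    (valuation_Mmat_one_one_sub_one_le ζ n).trans_lt (exp_lt_exp.2 (by lia))
  simpa using Valued.v.map_one_add_of_lt hlt

end Mmat

/-- With `M_n(ζ) = (α_n, β_n; γ_n, δ_n)`: the constant term of `δ_n` is `1`; the singular part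
`x` of `δ_n⁻¹ β_n` (inverse taken in the field of formal Laurent series) is supported in
degrees `−n, …, −1`; and every entry of `(1, −x; 0, 1) · M_n(ζ)` has only terms of
nonnegative degree. -/
theorem stmt6 (n : ℕ) (hn : 1 ≤ n) (ζ : ℕ → ℂ) :
    ((Mmat ζ n) 1 1).coeff 0 = 1 ∧
    (∀ k : ℤ, (k < -(n : ℤ) ∨ 0 ≤ k) →
      (singPart (((Mmat ζ n) 1 1)⁻¹ * (Mmat ζ n) 0 1)).coeff k = 0) ∧
    (∀ i j : Fin 2, ∀ k : ℤ, k < 0 →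
      ((!![1, -singPart (((Mmat ζ n) 1 1)⁻¹ * (Mmat ζ n) 0 1); 0, 1] * Mmat ζ n) i j).coeff k
        = 0) := by
  have hδ : Valued.v (Mmat ζ n 1 1) = 1 := valuation_Mmat_one_one ζ n
  have hδ_ne : Mmat ζ n 1 1 ≠ 0 := Valued.v.ne_zero_iff.1 (hδ.trans_ne one_ne_zero)
  have hδ_inv : Valued.v (Mmat ζ n 1 1)⁻¹ = 1 := by rw [map_inv₀, hδ, inv_one]
  refine ⟨coeff_zero_Mmat_one_one ζ n, fun k => coeff_singPart_eq_zero ?_, fun i j => ?_⟩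
  · rw [map_mul, hδ_inv, one_mul, neg_neg]
    exact (valuation_Mmat_le ζ n 1).1
  · refine mem_integer_iff_coeff_eq_zero.1 (shear_mul_apply_mem _ ?_ (inv_mul_cancel₀ hδ_ne)
      (sub_singPart_mem_integer _) (fun j => ?_) ?_ i j)
    · exact (Valuation.mem_integer_iff _ _).2 hδ_inv.le
    · exact (Valuation.mem_integer_iff _ _).2 (valuation_Mmat_le ζ n j).2
    · exact det_Mmat ζ n ▸ C_mem_integer _
end

section
/- Let n ≥ 1 and ζ_1, …, ζ_{n+1} ∈ ℂ. Then ( z · x^{(n+1)}(ζ_1, …, ζ_{n+1}) )₋ = x^{(n)}(ζ_2, …, ζ_{n+1}). In particular, ( z · x^{(n+1)}(ζ_1, …, ζ_{n+1}) )₋ does not depend on ζ_1. -/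
/-- The recursively defined Laurent polynomials `x⁽ᵏ⁾(ζ₁, …, ζ_k)`:
`x⁽¹⁾ = ζ₁ z⁻¹` and
`x⁽ᵏ⁺¹⁾ = ((1+|ζ_{k+1}|²) Σ_{p=0}^k conj(ζ_{k+1})^p (x⁽ᵏ⁾)^{p+1} z^{p(k+1)})₋ + ζ_{k+1} z^{−k−1}`
(`ζ` is indexed starting at `1`; the base case is subsumed via `x⁽⁰⁾ = 0`). -/
noncomputable def xrec (ζ : ℕ → ℂ) : ℕ → LaurentSeries ℂ
  | 0 => 0
  | m + 1 =>
      singPart (HahnSeries.single (0 : ℤ) (((1 + ‖ζ (m + 1)‖ ^ 2 : ℝ) : ℂ)) *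
          ∑ p ∈ Finset.range (m + 1),
            HahnSeries.single (0 : ℤ) ((starRingEnd ℂ (ζ (m + 1))) ^ p) *
              xrec ζ m ^ (p + 1) * HahnSeries.single ((p : ℤ) * ((m : ℤ) + 1)) 1)
        + HahnSeries.single (-(m : ℤ) - 1) (ζ (m + 1))

/-! The sum in the recursion is a partial sum of the geometric expansion of `x / (1 - c z^k x)`.
Multiplying it by `z` replaces `x` by `z x` and `k` by `k - 1`, which is the recursion for the
shifted sequence up to two errors: `z x⁽ᵐ⁺¹⁾` agrees with `y = x⁽ᵐ⁾(ζ₂, …)` only modulo `ℂ⟦z⟧`,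
and there is one surplus term. Since `y` has a pole of order at most `m`, the ratio `c z^(m+1) y`
is divisible by `z`, so neither error affects the singular part. -/

section OrderFiltration

open HahnSeries

variable {Γ R : Type*}

/-- The series with no terms in degree below `d`; in Laurent series this is `z^d R⟦z⟧`. Congruence
of `f` and `g` up to degree `d` is written `f - g ∈ orderGE d`. -/
def orderGE [LinearOrder Γ] [AddGroup R] (d : Γ) : AddSubgroup (HahnSeries Γ R) where
  carrier := {f | (d : WithTop Γ) ≤ f.orderTop}
  zero_mem' := by simp
  add_mem' {f g} hf hg :=
    show (d : WithTop Γ) ≤ (f + g).orderTop from (le_min hf hg).trans min_orderTop_le_orderTop_add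
  neg_mem' hf := by simpa using hf

theorem mem_orderGE_iff_le_orderTop [LinearOrder Γ] [AddGroup R] {d : Γ} {f : HahnSeries Γ R} :
    f ∈ orderGE d ↔ (d : WithTop Γ) ≤ f.orderTop :=
  Iff.rfl

theorem mem_orderGE_iff_coeff [LinearOrder Γ] [AddGroup R] {d : Γ} {f : HahnSeries Γ R} :
    f ∈ orderGE d ↔ ∀ k < d, f.coeff k = 0 := by
  simp [mem_orderGE_iff_le_orderTop, le_orderTop_iff_forall]

theorem orderGE_antitone [LinearOrder Γ] [AddGroup R] :
    Antitone (orderGE : Γ → AddSubgroup (HahnSeries Γ R)) :=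
  fun _ _ hde _ hf => (WithTop.coe_le_coe.2 hde).trans hf

theorem single_mem_orderGE [LinearOrder Γ] [AddGroup R] (d : Γ) (a : R) :
    single d a ∈ orderGE d :=
  orderTop_single_le

variable [AddCommMonoid Γ] [LinearOrder Γ] [IsOrderedCancelAddMonoid Γ]

theorem mul_mem_orderGE [NonUnitalNonAssocRing R] {d e : Γ} {f g : HahnSeries Γ R}
    (hf : f ∈ orderGE d) (hg : g ∈ orderGE e) : f * g ∈ orderGE (d + e) :=
  (add_le_add hf hg).trans orderTop_add_le_mul

theorem pow_mem_orderGE [Ring R] {d : Γ} {f : HahnSeries Γ R} (hf : f ∈ orderGE d) (n : ℕ) :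
    f ^ n ∈ orderGE (n • d) :=
  (nsmul_le_nsmul_right hf n).trans orderTop_nsmul_le_orderTop_pow

theorem pow_mem_orderGE_zero [Ring R] {f : HahnSeries Γ R} (hf : f ∈ orderGE (0 : Γ)) (n : ℕ) :
    f ^ n ∈ orderGE (0 : Γ) := by
  simpa using pow_mem_orderGE hf n

theorem pow_sub_pow_mem_orderGE [CommRing R] {d : Γ} {f g : HahnSeries Γ R}
    (hf : f ∈ orderGE (0 : Γ)) (hg : g ∈ orderGE (0 : Γ)) (hfg : f - g ∈ orderGE d) (n : ℕ) :
    f ^ n - g ^ n ∈ orderGE d := by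
  have hsum : ∑ i ∈ Finset.range n, f ^ i * g ^ (n - 1 - i) ∈ orderGE (0 : Γ) :=
    sum_mem fun i _ => by
      simpa using mul_mem_orderGE (pow_mem_orderGE_zero hf i) (pow_mem_orderGE_zero hg (n - 1 - i))
  rw [← geom_sum₂_mul]
  simpa using mul_mem_orderGE hsum hfg

end OrderFiltration

section GeomPartialSum

open HahnSeries

variable {R : Type*} [CommRing R]

/-- The partial sum `∑_{p < N} c^p x^{p+1} z^{pk}` of the geometric expansion of
`x / (1 - c z^k x)`. The recursion for `xrec` uses `k = N`; keeping the exponent and the number of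
terms separate makes multiplication by `z` a shift of the exponent alone. -/
noncomputable def geomPartialSum (c : R) (k : ℤ) (N : ℕ) (x : LaurentSeries R) :
    LaurentSeries R :=
  x * ∑ p ∈ Finset.range N, (single k c * x) ^ p

theorem geomPartialSum_succ (c : R) (k : ℤ) (N : ℕ) (x : LaurentSeries R) :
    geomPartialSum c k (N + 1) x = geomPartialSum c k N x + x * (single k c * x) ^ N := by
  rw [geomPartialSum, Finset.sum_range_succ, mul_add, geomPartialSum]

theorem single_one_mul_geomPartialSum (c : R) (k : ℤ) (N : ℕ) (x : LaurentSeries R) :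
    single 1 1 * geomPartialSum c (k + 1) N x = geomPartialSum c k N (single 1 1 * x) := by
  have hshift : single (k + 1) c * x = single k c * (single 1 1 * x) := by
    rw [← mul_assoc, single_mul_single, mul_one]
  rw [geomPartialSum, geomPartialSum, hshift, mul_assoc]

theorem geomPartialSum_eq_sum (c : R) (k : ℤ) (N : ℕ) (x : LaurentSeries R) :
    geomPartialSum c k N x =
      ∑ p ∈ Finset.range N, single 0 (c ^ p) * x ^ (p + 1) * single (p * k) 1 := by
  rw [geomPartialSum, Finset.mul_sum]
  refine Finset.sum_congr rfl fun p _ => ?_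
  have hpow : single k c ^ p = single 0 (c ^ p) * single (p * k) 1 := by
    rw [single_pow, single_mul_single, zero_add, mul_one, nsmul_eq_mul]
  rw [mul_pow, hpow]
  ring

theorem single_mul_mem_orderGE_zero {d k : ℤ} (c : R) {x : LaurentSeries R} (hx : x ∈ orderGE d)
    (hd : 0 ≤ k + d) : single k c * x ∈ orderGE (0 : ℤ) :=
  orderGE_antitone hd (mul_mem_orderGE (single_mem_orderGE k c) hx)

theorem geomPartialSum_mem_orderGE {d k : ℤ} (c : R) (N : ℕ) {x : LaurentSeries R}
    (hx : x ∈ orderGE d) (hd : 0 ≤ k + d) : geomPartialSum c k N x ∈ orderGE d := by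
  have hratio := single_mul_mem_orderGE_zero c hx hd
  simpa [geomPartialSum] using mul_mem_orderGE hx (sum_mem fun p _ => pow_mem_orderGE_zero hratio p)

theorem geomPartialSum_sub_mem_orderGE_zero {k : ℤ} (c : R) (N : ℕ)
    {x y : LaurentSeries R} (hx : x ∈ orderGE (-k)) (hy : y ∈ orderGE (-k))
    (hxy : x - y ∈ orderGE (0 : ℤ)) :
    geomPartialSum c k N x - geomPartialSum c k N y ∈ orderGE (0 : ℤ) := by
  set u := single k c * x with hu
  set v := single k c * y with hv
  have hu₀ : u ∈ orderGE (0 : ℤ) := single_mul_mem_orderGE_zero c hx (by simp)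
  have hv₀ : v ∈ orderGE (0 : ℤ) := single_mul_mem_orderGE_zero c hy (by simp)
  have huv : u - v ∈ orderGE k := by
    rw [hu, hv, ← mul_sub]
    simpa using mul_mem_orderGE (single_mem_orderGE k c) hxy
  have hsum : ∑ p ∈ Finset.range N, u ^ p ∈ orderGE (0 : ℤ) :=
    sum_mem fun p _ => pow_mem_orderGE_zero hu₀ p
  have hsum_sub : ∑ p ∈ Finset.range N, (u ^ p - v ^ p) ∈ orderGE k :=
    sum_mem fun p _ => pow_sub_pow_mem_orderGE hu₀ hv₀ huv p
  have hsplit : geomPartialSum c k N x - geomPartialSum c k N y =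
      (x - y) * ∑ p ∈ Finset.range N, u ^ p +
        y * ∑ p ∈ Finset.range N, (u ^ p - v ^ p) := by
    rw [geomPartialSum, geomPartialSum, Finset.sum_sub_distrib]
    ring
  rw [hsplit]
  exact add_mem (by simpa using mul_mem_orderGE hxy hsum)
    (by simpa using mul_mem_orderGE hy hsum_sub)

theorem geomPartialSum_succ_sub_mem_orderGE_zero (c : R) {m : ℕ} {x y : LaurentSeries R}
    (hy : y ∈ orderGE (-m : ℤ)) (hxy : x - y ∈ orderGE (0 : ℤ)) (N : ℕ) (hN : m ≤ N) :
    geomPartialSum c (m + 1) (N + 1) x - geomPartialSum c (m + 1) N y ∈ orderGE (0 : ℤ) := by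
  have hx : x ∈ orderGE (-m : ℤ) := by
    simpa using add_mem (orderGE_antitone (by simp) hxy) hy
  have hratio : single (m + 1 : ℤ) c * x ∈ orderGE (1 : ℤ) := by
    simpa using mul_mem_orderGE (single_mem_orderGE (m + 1 : ℤ) c) hx
  have hlast : x * (single (m + 1 : ℤ) c * x) ^ N ∈ orderGE (0 : ℤ) :=
    orderGE_antitone (by simpa using hN) (mul_mem_orderGE hx (pow_mem_orderGE hratio N))
  rw [geomPartialSum_succ, add_sub_right_comm]
  have hle : (-(m + 1) : ℤ) ≤ -m := by lia
  exact add_mem (geomPartialSum_sub_mem_orderGE_zero c N (orderGE_antitone hle hx)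
    (orderGE_antitone hle hy) hxy) hlast

end GeomPartialSum

section SingPart

open HahnSeries

theorem singPart_eq_truncLT (f : LaurentSeries ℂ) : singPart f = truncLT 0 f :=
  rfl

theorem singPart_add (f g : LaurentSeries ℂ) : singPart (f + g) = singPart f + singPart g :=
  truncLT_add 0 f g

theorem singPart_single_of_neg {d : ℤ} (hd : d < 0) (a : ℂ) :
    singPart (single d a) = single d a := by
  ext k
  obtain rfl | hk := eq_or_ne k d
  · rw [singPart_eq_truncLT, coeff_truncLT_of_lt hd]
  · simp [singPart_eq_truncLT, coeff_single_of_ne hk]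

theorem singPart_mem_orderGE {d : ℤ} {f : LaurentSeries ℂ} (hf : f ∈ orderGE d) :
    singPart f ∈ orderGE d := by
  rw [mem_orderGE_iff_coeff] at hf ⊢
  intro k hk
  simp [singPart_eq_truncLT, hf k hk]

theorem sub_singPart_mem_orderGE_zero (f : LaurentSeries ℂ) :
    f - singPart f ∈ orderGE (0 : ℤ) :=
  mem_orderGE_iff_coeff.2 fun k hk => by
    rw [coeff_sub, singPart_eq_truncLT, coeff_truncLT_of_lt hk, sub_self]

theorem singPart_eq_zero_of_mem_orderGE {f : LaurentSeries ℂ} (hf : f ∈ orderGE (0 : ℤ)) :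
    singPart f = 0 := by
  ext k
  rw [singPart_eq_truncLT, HahnSeries.coeff_truncLT, coeff_zero, ite_eq_right_iff]
  exact mem_orderGE_iff_coeff.1 hf k

theorem singPart_eq_of_sub_mem_orderGE {f g : LaurentSeries ℂ} (h : f - g ∈ orderGE (0 : ℤ)) :
    singPart f = singPart g := by
  rw [← sub_add_cancel f g, singPart_add, singPart_eq_zero_of_mem_orderGE h, zero_add]

theorem singPart_mul_congr {f g h : LaurentSeries ℂ} (hf : f ∈ orderGE (0 : ℤ))
    (hgh : g - h ∈ orderGE (0 : ℤ)) : singPart (f * g) = singPart (f * h) := by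
  refine singPart_eq_of_sub_mem_orderGE ?_
  rw [← mul_sub]
  simpa using mul_mem_orderGE hf hgh

theorem singPart_mul_singPart {f : LaurentSeries ℂ} (hf : f ∈ orderGE (0 : ℤ))
    (g : LaurentSeries ℂ) : singPart (f * singPart g) = singPart (f * g) :=
  (singPart_mul_congr hf (sub_singPart_mem_orderGE_zero g)).symm

end SingPart

section Recursion

open HahnSeries ComplexConjugate

theorem xrec_succ (ζ : ℕ → ℂ) (m : ℕ) :
    xrec ζ (m + 1) =
      singPart (single 0 ((1 + ‖ζ (m + 1)‖ ^ 2 : ℝ) : ℂ) *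
        geomPartialSum (conj (ζ (m + 1))) (m + 1) (m + 1) (xrec ζ m)) +
        single (-(m : ℤ) - 1) (ζ (m + 1)) := by
  rw [xrec, geomPartialSum_eq_sum]

theorem xrec_mem_orderGE (ζ : ℕ → ℂ) (m : ℕ) : xrec ζ m ∈ orderGE (-m : ℤ) := by
  induction m with
  | zero => exact zero_mem _
  | succ m ih =>
    have hsum := geomPartialSum_mem_orderGE (k := m + 1) (conj (ζ (m + 1))) (m + 1) ih (by simp)
    have hprod := mul_mem_orderGE
      (single_mem_orderGE (0 : ℤ) ((1 + ‖ζ (m + 1)‖ ^ 2 : ℝ) : ℂ)) hsum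
    rw [xrec_succ]
    exact add_mem (singPart_mem_orderGE (orderGE_antitone (by simp) hprod))
      (orderGE_antitone (by simp) (single_mem_orderGE _ _))

theorem singPart_single_one_mul_xrec_one (ζ : ℕ → ℂ) :
    singPart (single 1 1 * xrec ζ 1) = 0 :=
  singPart_eq_zero_of_mem_orderGE (single_mul_mem_orderGE_zero 1 (xrec_mem_orderGE ζ 1) (by simp))

theorem singPart_single_one_mul_xrec_add_two (ζ : ℕ → ℂ) (m : ℕ) :
    singPart (single 1 1 * xrec ζ (m + 2)) =
      singPart (single 0 ((1 + ‖ζ (m + 2)‖ ^ 2 : ℝ) : ℂ) *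
        geomPartialSum (conj (ζ (m + 2))) (m + 1) (m + 2) (single 1 1 * xrec ζ (m + 1))) +
        single (-(m : ℤ) - 1) (ζ (m + 2)) := by
  have hz : single 1 1 ∈ orderGE (R := ℂ) (0 : ℤ) :=
    orderGE_antitone zero_le_one (single_mem_orderGE 1 1)
  have hsingle : single 1 1 * single (-((m + 1 : ℕ) : ℤ) - 1) (ζ (m + 2)) =
      single (-(m : ℤ) - 1) (ζ (m + 2)) := by
    rw [single_mul_single, one_mul]
    congr 2
    push_cast
    ring
  rw [xrec_succ, mul_add, singPart_add, singPart_mul_singPart hz, hsingle,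
    singPart_single_of_neg (by lia), mul_left_comm, single_one_mul_geomPartialSum]
  push_cast
  rfl

end Recursion

/-- `(z · x⁽ⁿ⁺¹⁾(ζ₁, …, ζ_{n+1}))₋ = x⁽ⁿ⁾(ζ₂, …, ζ_{n+1})`; in particular the left-hand side
does not depend on `ζ₁`. -/
theorem stmt10 (n : ℕ) (hn : 1 ≤ n) (ζ : ℕ → ℂ) :
    singPart (HahnSeries.single (1 : ℤ) 1 * xrec ζ (n + 1))
      = xrec (fun j => ζ (j + 1)) n := by
  clear hn
  induction n with
  | zero => exact singPart_single_one_mul_xrec_one ζ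
  | succ m ih =>
    have hcongr : HahnSeries.single 1 1 * xrec ζ (m + 1) - xrec (fun j => ζ (j + 1)) m ∈
        orderGE (0 : ℤ) :=
      ih ▸ sub_singPart_mem_orderGE_zero _
    have hsum := geomPartialSum_succ_sub_mem_orderGE_zero (starRingEnd ℂ (ζ (m + 2)))
      (xrec_mem_orderGE _ m) hcongr (m + 1) (Nat.le_succ m)
    rw [singPart_single_one_mul_xrec_add_two, singPart_mul_congr (single_mem_orderGE 0 _) hsum,
      xrec_succ (fun j => ζ (j + 1))]
end
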